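/- arXiv:1507.02122 — 3 statements merged into one kernel-verified Lean document; each statement's English description precedes it below -/
import Mathlib

section
/- Every critical point of the reliability polynomial R_Mc on ℝ^5 is a saddle point: if all five partial derivatives of R_Mc vanish at a point p ∈ ℝ^5, then p is neither a local maximum nor a local minimum of R_Mc. -/
noncomputable def RMc (x1 x2 x3 x4 x5 : ℝ) : ℝ :=
  x1*x4 + x2*x5 + x2*x3*x4 - x1*x2*x3*x4 - x1*x2*x4*x5 - x2*x3*x4*x5 + x1*x2*x3*x4*x5

/-- A function that is affine in each variable and bounded on a box by its value at the
centre is constant on the box; the mixed fifth difference then contradicts the monomial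
of degree five. -/
theorem rmc_core (σ : ℝ) (hσ : σ ≠ 0) (p q r u v ε : ℝ) (hε : 0 < ε)
    (h : ∀ a b c d e : ℝ, |a| < ε → |b| < ε → |c| < ε → |d| < ε → |e| < ε →
      σ * RMc (p+a) (q+b) (r+c) (u+d) (v+e) ≤ σ * RMc p q r u v) : False := by
  have h0 : |(0:ℝ)| < ε := by simpa using hε
  have n : ∀ a : ℝ, |a| < ε → |-a| < ε := fun a ha => by simpa using ha
  have h1 : ∀ a : ℝ, |a| < ε →
      σ * RMc (p+a) (q+0) (r+0) (u+0) (v+0) = σ * RMc p q r u v := by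
    intro a ha
    have A := h a 0 0 0 0 ha h0 h0 h0 h0
    have B := h (-a) 0 0 0 0 (n a ha) h0 h0 h0 h0
    apply le_antisymm A
    simp only [RMc] at *
    linarith
  have h2 : ∀ a b : ℝ, |a| < ε → |b| < ε →
      σ * RMc (p+a) (q+b) (r+0) (u+0) (v+0) = σ * RMc p q r u v := by
    intro a b ha hb
    have A := h a b 0 0 0 ha hb h0 h0 h0
    have B := h a (-b) 0 0 0 ha (n b hb) h0 h0 h0
    have C := h1 a ha
    apply le_antisymm A
    simp only [RMc] at *
    linarith
  have h3 : ∀ a b c : ℝ, |a| < ε → |b| < ε → |c| < ε →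
      σ * RMc (p+a) (q+b) (r+c) (u+0) (v+0) = σ * RMc p q r u v := by
    intro a b c ha hb hc
    have A := h a b c 0 0 ha hb hc h0 h0
    have B := h a b (-c) 0 0 ha hb (n c hc) h0 h0
    have C := h2 a b ha hb
    apply le_antisymm A
    simp only [RMc] at *
    linarith
  have h4 : ∀ a b c d : ℝ, |a| < ε → |b| < ε → |c| < ε → |d| < ε →
      σ * RMc (p+a) (q+b) (r+c) (u+d) (v+0) = σ * RMc p q r u v := by
    intro a b c d ha hb hc hd
    have A := h a b c d 0 ha hb hc hd h0
    have B := h a b c (-d) 0 ha hb hc (n d hd) h0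
    have C := h3 a b c ha hb hc
    apply le_antisymm A
    simp only [RMc] at *
    linarith
  have h5 : ∀ a b c d e : ℝ, |a| < ε → |b| < ε → |c| < ε → |d| < ε → |e| < ε →
      σ * RMc (p+a) (q+b) (r+c) (u+d) (v+e) = σ * RMc p q r u v := by
    intro a b c d e ha hb hc hd he
    have A := h a b c d e ha hb hc hd he
    have B := h a b c d (-e) ha hb hc hd (n e he)
    have C := h4 a b c d ha hb hc hd
    apply le_antisymm A
    simp only [RMc] at *
    linarith
  obtain ⟨t, ht0, ht⟩ : ∃ t : ℝ, 0 < t ∧ |t| < ε :=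
    ⟨ε/2, by positivity, by rw [abs_of_pos (by positivity)]; linarith⟩
  -- successive differences in the five coordinates
  have k1 : ∀ b c d e : ℝ, |b| < ε → |c| < ε → |d| < ε → |e| < ε →
      σ * (RMc (p+t) (q+b) (r+c) (u+d) (v+e) - RMc (p+0) (q+b) (r+c) (u+d) (v+e)) = 0 := by
    intro b c d e hb hc hd he
    linarith [h5 t b c d e ht hb hc hd he, h5 0 b c d e h0 hb hc hd he]
  have k2 : ∀ c d e : ℝ, |c| < ε → |d| < ε → |e| < ε →
      σ * t^2 * ((r+c)*(u+d)*(v+e) - (r+c)*(u+d) - (u+d)*(v+e)) = 0 := by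
    intro c d e hc hd he
    have A := k1 t c d e ht hc hd he
    have B := k1 0 c d e h0 hc hd he
    simp only [RMc] at *
    linarith
  have k3 : ∀ d e : ℝ, |d| < ε → |e| < ε →
      σ * t^3 * ((u+d)*(v+e) - (u+d)) = 0 := by
    intro d e hd he
    linarith [k2 t d e ht hd he, k2 0 d e h0 hd he]
  have k4 : ∀ e : ℝ, |e| < ε → σ * t^4 * ((v+e) - 1) = 0 := by
    intro e he
    linarith [k3 t e ht he, k3 0 e h0 he]
  have k5 : σ * t^5 = 0 := by
    linarith [k4 t ht, k4 0 h0]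
  exact mul_ne_zero hσ (pow_ne_zero 5 ht0.ne') k5

/-- Reformulation for points of `Fin 5 → ℝ`. -/
theorem rmc_core' (σ : ℝ) (hσ : σ ≠ 0) (p : Fin 5 → ℝ)
    (h : ∀ᶠ x in nhds p, σ * RMc (x 0) (x 1) (x 2) (x 3) (x 4) ≤
      σ * RMc (p 0) (p 1) (p 2) (p 3) (p 4)) : False := by
  obtain ⟨ε, hε, H⟩ := Metric.eventually_nhds_iff.1 h
  refine rmc_core σ hσ (p 0) (p 1) (p 2) (p 3) (p 4) ε hε ?_
  intro a b c d e ha hb hc hd he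
  have := @H ![p 0 + a, p 1 + b, p 2 + c, p 3 + d, p 4 + e] (by
    rw [dist_pi_lt_iff hε]
    intro i
    fin_cases i <;> simpa [Real.dist_eq])
  simpa using this

theorem rmc_critical_points_are_saddle (p : Fin 5 → ℝ)
    (hcrit : ∀ i : Fin 5,
      deriv (fun s => RMc ((Function.update p i s) 0) ((Function.update p i s) 1)
        ((Function.update p i s) 2) ((Function.update p i s) 3)
        ((Function.update p i s) 4)) (p i) = 0) :
    ¬ IsLocalMax (fun x : Fin 5 → ℝ => RMc (x 0) (x 1) (x 2) (x 3) (x 4)) p ∧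
    ¬ IsLocalMin (fun x : Fin 5 → ℝ => RMc (x 0) (x 1) (x 2) (x 3) (x 4)) p := by
  constructor
  · intro h
    exact rmc_core' 1 one_ne_zero p (h.mono fun x hx => by simpa using hx)
  · intro h
    exact rmc_core' (-1) (by norm_num) p (h.mono fun x hx => by simpa using hx)
end

section
/- The diagonal reliability function f(x) = 2x² + x³ − 3x⁴ + x⁵ satisfies f(0) = 0, f(1) = 1, and f is strictly monotonically increasing on the interval [0,1]. -/
theorem diagonal_sigmoid :
    (fun x : ℝ => 2*x^2 + x^3 - 3*x^4 + x^5) 0 = 0 ∧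
    (fun x : ℝ => 2*x^2 + x^3 - 3*x^4 + x^5) 1 = 1 ∧
    StrictMonoOn (fun x : ℝ => 2*x^2 + x^3 - 3*x^4 + x^5) (Set.Icc 0 1) := by
  refine ⟨by norm_num, by norm_num, ?_⟩
  apply strictMonoOn_of_deriv_pos (convex_Icc 0 1)
  · fun_prop
  · intro x hx
    rw [interior_Icc] at hx
    obtain ⟨h0, h1⟩ := hx
    have hd : HasDerivAt (fun x : ℝ => 2*x^2 + x^3 - 3*x^4 + x^5)
        (x * ((1 - x) * (4 + 7*x - 5*x^2))) x := by
      have h := ((((hasDerivAt_pow 2 x).const_mul 2).add (hasDerivAt_pow 3 x)).sub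
        ((hasDerivAt_pow 4 x).const_mul 3)).add (hasDerivAt_pow 5 x)
      refine h.congr_deriv ?_
      push_cast
      ring
    rw [hd.deriv]
    have h2 : 0 < 4 + 7*x - 5*x^2 := by nlinarith
    exact mul_pos h0 (mul_pos (by linarith) h2)
end

section
/- Suppose a1,...,a6, b1,...,b6 are real numbers such that R_Mc(a1 t + b1, a2 t + b2, a3 t + b3, a4 t + b4, a5 t + b5) = a6 t + b6 holds for every real t (i.e., the affine line t ↦ (a1 t + b1, ..., a5 t + b5, a6 t + b6) is contained in the graph of R_Mc). Then b6 = R_Mc(b1, b2, b3, b4, b5) and a1 a2 a3 a4 a5 = 0. -/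
theorem rmc_line_necessary_conditions (a1 a2 a3 a4 a5 a6 b1 b2 b3 b4 b5 b6 : ℝ)
    (hline : ∀ t : ℝ,
      RMc (a1*t + b1) (a2*t + b2) (a3*t + b3) (a4*t + b4) (a5*t + b5) = a6*t + b6) :
    b6 = RMc b1 b2 b3 b4 b5 ∧ a1*a2*a3*a4*a5 = 0 := by
  constructor
  · have h := hline 0
    simp only [mul_zero, zero_add] at h
    exact h.symm
  · -- fifth finite difference of a polynomial of degree at most 5
    have h0 := hline 0
    have h1 := hline 1
    have h2 := hline 2
    have h3 := hline 3
    have h4 := hline 4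
    have h5 := hline 5
    unfold RMc at h0 h1 h2 h3 h4 h5
    linear_combination (1/120 : ℝ) * (h5 - 5*h4 + 10*h3 - 10*h2 + 5*h1 - h0)
end
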